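/- Let ω(n) denote the number of distinct prime factors of n. For every integer n ≥ 3, ω(n) < 1.3841·(log n)/(log log n). -/

import Mathlib

/-!
If `ω(n) = k`, then `n` is at least the product `P k` of the first `k` primes, and `x ↦ log x / x`
decreases on `[e, ∞)`. So it suffices to find `c ≥ e` with `c ≤ log (P k)` and
`k * log c < 1.3841 * c` (`mul_log_lt_of_le`).

* For `k ≤ 3`, the bound `log x ≤ x / e` is enough, because `3 / e < 1.3841`.
* For `4 ≤ k ≤ 12`, `c` is `log (P k)` rounded down to three decimals, and both inequalities are
  checked with truncated exponential series. The case `k = 9` is the extremal one for the theorem: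
  there the ratio `k * log c / c` at `c = log (P 9)` is `1.38401…`.
* For `k ≥ 13`, `c = k * log k` works: with `L = log k` one has
  `log (k * log k) / log k = 1 + log L / L ≤ 1 + 1 / e < 1.3841`. The inequality
  `k * log k ≤ log (P k)` is an induction on `k`, the increment of `x * log x` from `k` to `k + 1`
  being at most `1 + log (k + 1) ≤ log (3 * (k + 1))`. The `m`-th prime is at least `3 * m` for
  `m ≥ 14` since all primes above `3` are coprime to `6`. No Chebyshev-type estimate is needed.
-/

/-- The product of the first `k` primes. -/
noncomputable def firstPrimesProd (k : ℕ) : ℕ := ∏ i ∈ Finset.range k, Nat.nth Nat.Prime i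

lemma firstPrimesProd_succ (k : ℕ) :
    firstPrimesProd (k + 1) = firstPrimesProd k * Nat.nth Nat.Prime k :=
  Finset.prod_range_succ _ _

lemma firstPrimesProd_pos (k : ℕ) : 0 < firstPrimesProd k :=
  Finset.prod_pos fun i _ => (Nat.prime_nth_prime i).pos

/-- Among sets of `k` primes, the first `k` primes have the smallest product: the largest element of
such a set is at least the `k`-th prime. -/
lemma firstPrimesProd_le (k : ℕ) : ∀ S : Finset ℕ, S.card = k → (∀ p ∈ S, p.Prime) →
    firstPrimesProd k ≤ ∏ p ∈ S, p := by
  induction k with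
  | zero =>
    intro S hS _
    rw [Finset.card_eq_zero] at hS
    simp [hS, firstPrimesProd]
  | succ k ih =>
    intro S hS hp
    have hne : S.Nonempty := by
      rw [← Finset.card_pos]; omega
    have hm := S.max'_mem hne
    have hmax : Nat.nth Nat.Prime k ≤ S.max' hne := by
      have : k < Nat.count Nat.Prime (S.max' hne + 1) := by
        rw [Nat.count_eq_card_filter_range]
        refine (by omega : k < S.card).trans_le (Finset.card_le_card fun p h => ?_)
        simp only [Finset.mem_filter, Finset.mem_range]
        exact ⟨Nat.lt_succ_of_le (S.le_max' p h), hp p h⟩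
      have := Nat.nth_lt_of_lt_count this
      omega
    rw [firstPrimesProd_succ, ← Finset.prod_erase_mul S _ hm]
    refine Nat.mul_le_mul (ih _ ?_ ?_) hmax
    · rw [Finset.card_erase_of_mem hm]; omega
    · exact fun p h => hp p (Finset.mem_of_mem_erase h)

lemma firstPrimesProd_le_self {n : ℕ} (hn : n ≠ 0) :
    firstPrimesProd n.primeFactors.card ≤ n :=
  (firstPrimesProd_le _ _ rfl fun _ h => Nat.prime_of_mem_primeFactors h).trans
    (Nat.le_of_dvd (Nat.pos_of_ne_zero hn) (Nat.prod_primeFactors_dvd n))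

lemma nth_prime_eq {i p : ℕ} (hp : p.Prime) (h : Nat.count Nat.Prime p = i) :
    Nat.nth Nat.Prime i = p := h ▸ Nat.nth_count hp

lemma firstPrimesProd_four : firstPrimesProd 4 = 210 := by
  norm_num [firstPrimesProd, Finset.prod_range_succ, Finset.prod_range_zero,
    nth_prime_eq (i := 0) (p := 2) (by norm_num) (by decide),
    nth_prime_eq (i := 1) (p := 3) (by norm_num) (by decide),
    nth_prime_eq (i := 2) (p := 5) (by norm_num) (by decide),
    nth_prime_eq (i := 3) (p := 7) (by norm_num) (by decide)]

lemma firstPrimesProd_five : firstPrimesProd 5 = 2310 := by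
  rw [firstPrimesProd_succ, firstPrimesProd_four,
    nth_prime_eq (p := 11) (by norm_num) (by decide)]

lemma firstPrimesProd_six : firstPrimesProd 6 = 30030 := by
  rw [firstPrimesProd_succ, firstPrimesProd_five,
    nth_prime_eq (p := 13) (by norm_num) (by decide)]

lemma firstPrimesProd_seven : firstPrimesProd 7 = 510510 := by
  rw [firstPrimesProd_succ, firstPrimesProd_six,
    nth_prime_eq (p := 17) (by norm_num) (by decide)]

lemma firstPrimesProd_eight : firstPrimesProd 8 = 9699690 := by
  rw [firstPrimesProd_succ, firstPrimesProd_seven,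
    nth_prime_eq (p := 19) (by norm_num) (by decide)]

lemma firstPrimesProd_nine : firstPrimesProd 9 = 223092870 := by
  rw [firstPrimesProd_succ, firstPrimesProd_eight,
    nth_prime_eq (p := 23) (by norm_num) (by decide)]

lemma firstPrimesProd_ten : firstPrimesProd 10 = 6469693230 := by
  rw [firstPrimesProd_succ, firstPrimesProd_nine,
    nth_prime_eq (p := 29) (by norm_num) (by decide)]

lemma firstPrimesProd_eleven : firstPrimesProd 11 = 200560490130 := by
  rw [firstPrimesProd_succ, firstPrimesProd_ten,
    nth_prime_eq (p := 31) (by norm_num) (by decide)]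

lemma firstPrimesProd_twelve : firstPrimesProd 12 = 7420738134810 := by
  rw [firstPrimesProd_succ, firstPrimesProd_eleven,
    nth_prime_eq (p := 37) (by norm_num) (by decide)]

lemma firstPrimesProd_thirteen : firstPrimesProd 13 = 304250263527210 := by
  rw [firstPrimesProd_succ, firstPrimesProd_twelve,
    nth_prime_eq (p := 41) (by norm_num) (by decide)]

lemma three_mul_count_prime_le {m : ℕ} (hm : m.Prime) (h : 43 ≤ m) :
    3 * (Nat.count Nat.Prime m + 1) ≤ m := by
  rcases lt_or_ge m 60 with h60 | h60
  · interval_cases m <;> first | decide | (exfalso; revert hm; norm_num)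
  · -- From `60` on, at most two residues modulo `6` contain primes, and `π(59) = 17`.
    obtain ⟨n, rfl⟩ := Nat.exists_eq_add_of_le h60
    have h1 := Nat.primeCounting'_add_le (a := 6) (k := 60) (by norm_num) (by norm_num) n
    have h2 : Nat.totient 6 = 2 := by decide
    have h3 : Nat.primeCounting' 60 = 17 := by decide
    rw [h2, h3] at h1
    change Nat.count Nat.Prime (60 + n) ≤ _ at h1
    omega

lemma three_mul_le_nth_prime {k : ℕ} (hk : 13 ≤ k) : 3 * (k + 1) ≤ Nat.nth Nat.Prime k := by
  have h13 : Nat.nth Nat.Prime 13 = 43 := nth_prime_eq (by norm_num) (by decide)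
  have h43 : 43 ≤ Nat.nth Nat.Prime k :=
    h13 ▸ Nat.nth_monotone Nat.infinite_setOfPred_prime hk
  have := three_mul_count_prime_le (Nat.prime_nth_prime k) h43
  rwa [Nat.count_nth_of_infinite Nat.infinite_setOfPred_prime] at this

lemma mul_log_self_le_log_firstPrimesProd {k : ℕ} (hk : 13 ≤ k) :
    (k : ℝ) * Real.log k ≤ Real.log (firstPrimesProd k) := by
  induction k, hk using Nat.le_induction with
  | base =>
    rw [firstPrimesProd_thirteen, ← Real.log_pow]
    exact Real.log_le_log (by norm_num) (by norm_num)
  | succ k hk ih =>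
    have hk0 : (0 : ℝ) < k := by positivity
    have hq : (3 * (k + 1) : ℝ) ≤ (Nat.nth Nat.Prime k : ℕ) := by
      exact_mod_cast three_mul_le_nth_prime hk
    have hlogq := Real.log_le_log (by positivity) hq
    rw [Real.log_mul (by norm_num) (by positivity)] at hlogq
    have h3 : 1 ≤ Real.log 3 := by
      rw [Real.le_log_iff_exp_le (by norm_num)]
      linarith [Real.exp_one_lt_d9]
    -- `k * log (1 + 1 / k) ≤ 1`
    have hstep : (k : ℝ) * (Real.log (k + 1) - Real.log k) ≤ 1 := by
      rw [← Real.log_div (by positivity) (by positivity)]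
      have := Real.log_le_sub_one_of_pos (show (0 : ℝ) < (k + 1) / k by positivity)
      calc (k : ℝ) * Real.log ((k + 1) / k) ≤ k * ((k + 1) / k - 1) := by gcongr
        _ = 1 := by field_simp; ring
    have hP : ((firstPrimesProd k : ℕ) : ℝ) ≠ 0 := by
      exact_mod_cast (firstPrimesProd_pos k).ne'
    have hp : ((Nat.nth Nat.Prime k : ℕ) : ℝ) ≠ 0 := by
      exact_mod_cast (Nat.prime_nth_prime k).ne_zero
    rw [firstPrimesProd_succ, Nat.cast_mul, Real.log_mul hP hp]
    push_cast
    linarith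

lemma log_le_div_exp_one {x : ℝ} (hx : 0 < x) : Real.log x ≤ x / Real.exp 1 := by
  have := Real.log_le_sub_one_of_pos (div_pos hx (Real.exp_pos 1))
  rw [Real.log_div hx.ne' (Real.exp_pos 1).ne', Real.log_exp] at this
  linarith

lemma inv_exp_one_lt : 1 / Real.exp 1 < 0.37 := by
  rw [div_lt_iff₀ (Real.exp_pos 1)]
  linarith [Real.exp_one_gt_d9]

/-- Since `log x / x` decreases on `[e, ∞)`, a bound for it at `c` propagates to all `x ≥ c`. -/
lemma mul_log_lt_of_le {a b c x : ℝ} (ha : 0 ≤ a) (hc : Real.exp 1 ≤ c) (hcx : c ≤ x)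
    (h : a * Real.log c < b * c) : a * Real.log x < b * x := by
  have hc0 : 0 < c := (Real.exp_pos 1).trans_le hc
  have hx0 : 0 < x := hc0.trans_le hcx
  have hmono : Real.log x / x ≤ Real.log c / c :=
    Real.log_div_self_antitoneOn hc (hc.trans hcx) hcx
  have : a * (Real.log x / x) < b := by
    refine (mul_le_mul_of_nonneg_left hmono ha).trans_lt ?_
    rwa [← mul_div_assoc, div_lt_iff₀ hc0]
  rwa [← mul_div_assoc, div_lt_iff₀ hx0] at this

/-- Rational certificate for one value of `k`: `hP` implies `exp c ≤ P` by a Taylor bound for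
`exp (c / 32)`, and `he` implies `c < exp (1.3841 * c / k)` by truncating the exponential series. -/
lemma mul_log_lt_of_certificate {k P : ℕ} {c x : ℝ} (hk : 0 < k) (hPx : Real.log P ≤ x)
    (hc : 2.72 ≤ c) (hc' : c ≤ 32)
    (hP : (∑ m ∈ Finset.range 8, (c / 32) ^ m / m.factorial +
      (c / 32) ^ 8 * (8 + 1) / (Nat.factorial 8 * 8)) ^ 32 ≤ (P : ℝ))
    (he : c < ∑ m ∈ Finset.range 16, (1.3841 * c / k) ^ m / m.factorial) :
    k * Real.log x < 1.3841 * x := by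
  have hk' : (0 : ℝ) < k := by exact_mod_cast hk
  have hexp : Real.exp c ≤ P := by
    refine le_trans ?_ hP
    have h1 := Real.exp_bound' (x := c / 32) (by positivity) (by linarith) (n := 8) (by norm_num)
    calc Real.exp c = Real.exp (c / 32) ^ 32 := by
          rw [← Real.exp_nat_mul]; congr 1; push_cast; ring
      _ ≤ _ := by
          refine pow_le_pow_left₀ (Real.exp_pos _).le ?_ 32
          exact_mod_cast h1
  have hP0 : (0 : ℝ) < P := (Real.exp_pos c).trans_le hexp
  refine mul_log_lt_of_le hk'.le (c := c) (by linarith [Real.exp_one_lt_d9])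
    (((Real.le_log_iff_exp_le hP0).2 hexp).trans hPx) ?_
  have h2 := he.trans_le (Real.sum_le_exp_of_nonneg (by positivity) 16)
  rw [← Real.log_lt_iff_lt_exp (by linarith), lt_div_iff₀ hk'] at h2
  linarith

lemma mul_log_lt_of_thirteen_le {k : ℕ} {x : ℝ} (hk : 13 ≤ k)
    (hx : Real.log (firstPrimesProd k) ≤ x) : k * Real.log x < 1.3841 * x := by
  have hk' : (13 : ℝ) ≤ k := by exact_mod_cast hk
  have hL : 1 ≤ Real.log k := by
    rw [Real.le_log_iff_exp_le (by linarith)]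
    linarith [Real.exp_one_lt_d9]
  have hL0 : 0 < Real.log k := by linarith
  refine mul_log_lt_of_le (by positivity) (c := k * Real.log k)
    (by nlinarith [Real.exp_one_lt_d9])
    ((mul_log_self_le_log_firstPrimesProd hk).trans hx) ?_
  rw [Real.log_mul (by positivity) hL0.ne', mul_left_comm]
  refine mul_lt_mul_of_pos_left ?_ (by positivity)
  have h1 := log_le_div_exp_one hL0
  have h2 := mul_lt_mul_of_pos_left inv_exp_one_lt hL0
  rw [mul_one_div] at h2
  linarith

lemma mul_log_lt {k : ℕ} {x : ℝ} (hx0 : 0 < x) (hx : Real.log (firstPrimesProd k) ≤ x) :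
    k * Real.log x < 1.3841 * x := by
  rcases Nat.lt_or_ge 3 k with hk3 | hk3
  · rcases Nat.lt_or_ge k 13 with hk | hk
    · interval_cases k
      · rw [firstPrimesProd_four] at hx
        refine mul_log_lt_of_certificate (c := 5.347) (by norm_num) hx ?_ ?_ ?_ ?_ <;>
          norm_num [Finset.sum_range_succ, Nat.factorial]
      · rw [firstPrimesProd_five] at hx
        refine mul_log_lt_of_certificate (c := 7.745) (by norm_num) hx ?_ ?_ ?_ ?_ <;>
          norm_num [Finset.sum_range_succ, Nat.factorial]
      · rw [firstPrimesProd_six] at hx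
        refine mul_log_lt_of_certificate (c := 10.309) (by norm_num) hx ?_ ?_ ?_ ?_ <;>
          norm_num [Finset.sum_range_succ, Nat.factorial]
      · rw [firstPrimesProd_seven] at hx
        refine mul_log_lt_of_certificate (c := 13.143) (by norm_num) hx ?_ ?_ ?_ ?_ <;>
          norm_num [Finset.sum_range_succ, Nat.factorial]
      · rw [firstPrimesProd_eight] at hx
        refine mul_log_lt_of_certificate (c := 16.087) (by norm_num) hx ?_ ?_ ?_ ?_ <;>
          norm_num [Finset.sum_range_succ, Nat.factorial]
      · rw [firstPrimesProd_nine] at hx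
        refine mul_log_lt_of_certificate (c := 19.223) (by norm_num) hx ?_ ?_ ?_ ?_ <;>
          norm_num [Finset.sum_range_succ, Nat.factorial]
      · rw [firstPrimesProd_ten] at hx
        refine mul_log_lt_of_certificate (c := 22.59) (by norm_num) hx ?_ ?_ ?_ ?_ <;>
          norm_num [Finset.sum_range_succ, Nat.factorial]
      · rw [firstPrimesProd_eleven] at hx
        refine mul_log_lt_of_certificate (c := 26.024) (by norm_num) hx ?_ ?_ ?_ ?_ <;>
          norm_num [Finset.sum_range_succ, Nat.factorial]
      · rw [firstPrimesProd_twelve] at hx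
        refine mul_log_lt_of_certificate (c := 29.635) (by norm_num) hx ?_ ?_ ?_ ?_ <;>
          norm_num [Finset.sum_range_succ, Nat.factorial]
    · exact mul_log_lt_of_thirteen_le hk hx
  · have hk' : (k : ℝ) ≤ 3 := by exact_mod_cast hk3
    have h1 := mul_le_mul_of_nonneg_left (log_le_div_exp_one hx0) (Nat.cast_nonneg (α := ℝ) k)
    have h2 : (k : ℝ) * (x / Real.exp 1) ≤ 3 * (x / Real.exp 1) := by gcongr
    have h3 := mul_lt_mul_of_pos_left inv_exp_one_lt hx0
    rw [mul_one_div] at h3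
    linarith

/-- **Lemma 6 (i).**  Let `ω(n)` denote the number of distinct prime factors of `n`.
For every integer `n ≥ 3`, `ω(n) < 1.3841·(log n)/(log log n)`. -/
theorem omega_lt (n : ℕ) (hn : 3 ≤ n) :
    (n.primeFactors.card : ℝ) < 1.3841 * Real.log n / Real.log (Real.log n) := by
  have hn' : (3 : ℝ) ≤ n := by exact_mod_cast hn
  have h1 : 1 < Real.log n := by
    rw [Real.lt_log_iff_exp_lt (by linarith)]
    linarith [Real.exp_one_lt_d9]
  rw [lt_div_iff₀ (Real.log_pos h1)]
  refine mul_log_lt (by linarith) (Real.log_le_log ?_ ?_)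
  · exact_mod_cast firstPrimesProd_pos _
  · exact_mod_cast firstPrimesProd_le_self (by omega)
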